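/- For every infinite binary sequence x ∈ B^ℕ, h̲(x) = 1 if and only if γ̲(x) = 1/2. -/

import Mathlib

open Filter Topology

/-- The factor of length `len` of the sequence `x` starting at position `i`. -/
def factor (x : ℕ → Bool) (i len : ℕ) : List Bool :=
  List.ofFn (fun j : Fin len => x (i + j))

/-- Number of (possibly overlapping) occurrences of the word `u`
in the prefix `x[0:n)` of the sequence `x`. -/
def occ (x : ℕ → Bool) (n : ℕ) (u : List Bool) : ℕ :=
  ((Finset.range (n + 1 - u.length)).filter (fun i => factor x i u.length = u)).card

/-- Non-aligned `ℓ`-block entropy of the prefix `x[0:n)`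
(logs are base 2, with the convention `0 · log 0 = 0`). -/
noncomputable def hBlock (ℓ : ℕ) (x : ℕ → Bool) (n : ℕ) : ℝ :=
  -(1 / (ℓ : ℝ)) * ∑ u : Fin ℓ → Bool,
    ((occ x n (List.ofFn u) : ℝ) / ((n : ℝ) - ℓ + 1)) *
      Real.logb 2 ((occ x n (List.ofFn u) : ℝ) / ((n : ℝ) - ℓ + 1))

/-- `h̲(x) = lim_{ℓ→∞} liminf_{n→∞} h_ℓ(x[0:n))` (the limit in `ℓ` exists). -/
noncomputable def hLow (x : ℕ → Bool) : ℝ :=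
  atTop.liminf fun ℓ => atTop.liminf fun n => hBlock ℓ x n

/-- `h̄(x) = lim_{ℓ→∞} limsup_{n→∞} h_ℓ(x[0:n))` (the limit in `ℓ` exists). -/
noncomputable def hUp (x : ℕ → Bool) : ℝ :=
  atTop.limsup fun ℓ => atTop.limsup fun n => hBlock ℓ x n

/-- `γ_ℓ(x[0:n))`: normalized minimal number of prediction errors when predicting
`x[i]` from the preceding `ℓ` symbols `x[i-ℓ:i)`, for `i ∈ {ℓ,…,n-1}`. -/
noncomputable def gammaWord (ℓ : ℕ) (x : ℕ → Bool) (n : ℕ) : ℝ :=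
  (1 / ((n : ℝ) - ℓ)) *
    ((Finset.univ : Finset ((Fin ℓ → Bool) → Bool)).inf' Finset.univ_nonempty
      (fun f => ((((Finset.Ico ℓ n).filter
        (fun i => x i ≠ f (fun j => x (i - ℓ + j)))).card : ℝ))))

/-- `β_ℓ(x[0:n))`: normalized minimal number of prediction errors when predicting
`x[i]` from the following `ℓ` symbols `x[i+1:i+ℓ+1)`, for `i ∈ {0,…,n-ℓ-1}`. -/
noncomputable def betaWord (ℓ : ℕ) (x : ℕ → Bool) (n : ℕ) : ℝ :=
  (1 / ((n : ℝ) - ℓ)) *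
    ((Finset.univ : Finset ((Fin ℓ → Bool) → Bool)).inf' Finset.univ_nonempty
      (fun f => ((((Finset.range (n - ℓ)).filter
        (fun i => x i ≠ f (fun j => x (i + 1 + j)))).card : ℝ))))

/-- `γ̲(x) = lim_{ℓ→∞} liminf_{n→∞} γ_ℓ(x[0:n))` (the limit in `ℓ` exists, by monotonicity). -/
noncomputable def gammaLow (x : ℕ → Bool) : ℝ :=
  atTop.liminf fun ℓ => atTop.liminf fun n => gammaWord ℓ x n

/-- `γ̄(x) = lim_{ℓ→∞} limsup_{n→∞} γ_ℓ(x[0:n))` (the limit in `ℓ` exists, by monotonicity). -/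
noncomputable def gammaUp (x : ℕ → Bool) : ℝ :=
  atTop.limsup fun ℓ => atTop.limsup fun n => gammaWord ℓ x n

/-- `β̲(x) = lim_{ℓ→∞} liminf_{n→∞} β_ℓ(x[0:n))` (the limit in `ℓ` exists, by monotonicity). -/
noncomputable def betaLow (x : ℕ → Bool) : ℝ :=
  atTop.liminf fun ℓ => atTop.liminf fun n => betaWord ℓ x n

/-- `β̄(x) = lim_{ℓ→∞} limsup_{n→∞} β_ℓ(x[0:n))` (the limit in `ℓ` exists, by monotonicity). -/
noncomputable def betaUp (x : ℕ → Bool) : ℝ :=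
  atTop.limsup fun ℓ => atTop.limsup fun n => betaWord ℓ x n

/-- Binary Shannon entropy function `H(α) = -α log α - (1-α) log (1-α)` (base-2 logs). -/
noncomputable def binEntropy (a : ℝ) : ℝ :=
  -(a * Real.logb 2 a) - (1 - a) * Real.logb 2 (1 - a)

/-- Conditional block entropy `Hc^{n,ℓ}(x)`:
`-Σ_{ā ∈ B^ℓ, a ∈ B, p(ā·a) > 0} p(ā·a) · log (p(ā·a)/p(ā))`, where
`p(ā) = occ(x[0:n-1), ā)/(n-ℓ)` and `p(ā·a) = occ(x[0:n), ā·a)/(n-ℓ)`. -/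
noncomputable def condEntropy (ℓ : ℕ) (x : ℕ → Bool) (n : ℕ) : ℝ :=
  -∑ u : Fin ℓ → Bool, ∑ a : Bool,
    (if 0 < ((occ x n (List.ofFn u ++ [a]) : ℝ) / ((n : ℝ) - ℓ)) then
      ((occ x n (List.ofFn u ++ [a]) : ℝ) / ((n : ℝ) - ℓ)) *
        Real.logb 2 (((occ x n (List.ofFn u ++ [a]) : ℝ) / ((n : ℝ) - ℓ)) /
          ((occ x (n - 1) (List.ofFn u) : ℝ) / ((n : ℝ) - ℓ)))
    else 0)

/-- The real number in `[0,1]` denoted by the binary sequence `x`. -/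
noncomputable def val (x : ℕ → Bool) : ℝ :=
  ∑' n : ℕ, (if x n then (1 : ℝ) else 0) / 2 ^ (n + 1)

namespace HG

def F (x : ℕ → Bool) (k i : ℕ) : Fin k → Bool := fun j => x (i + j)

noncomputable def G (x : ℕ → Bool) (k : ℕ) (f : (Fin k → Bool) → Bool) (n : ℕ) : ℝ :=
  ∑ j ∈ Finset.range n, if x (k + j) ≠ f (F x k j) then 1 else 0

noncomputable def C (x : ℕ → Bool) (k : ℕ) (u : Fin k → Bool) (n : ℕ) : ℝ :=
  ∑ j ∈ Finset.range n, if F x k j = u then 1 else 0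

lemma occ_eq (x : ℕ → Bool) (k : ℕ) (u : Fin k → Bool) (n : ℕ) :
    (occ x n (List.ofFn u) : ℝ) = C x k u (n + 1 - k) := by
  unfold occ C factor
  rw [Finset.card_filter]
  push_cast
  rw [List.length_ofFn]
  refine Finset.sum_congr rfl fun i _ => ?_
  have : (List.ofFn (fun j : Fin k => x (i + j)) = List.ofFn u) ↔ F x k i = u :=
    List.ofFn_injective.eq_iff
  simp only [this]

lemma gammaWord_eq (x : ℕ → Bool) (k n : ℕ) :
    gammaWord k x n = (1 / ((n : ℝ) - k)) *
    ((Finset.univ : Finset ((Fin k → Bool) → Bool)).inf' Finset.univ_nonempty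
      (fun f => G x k f (n - k))) := by
  unfold gammaWord
  congr 2
  funext f
  unfold G
  rw [Finset.card_filter]
  push_cast
  rw [Finset.sum_Ico_eq_sum_range]
  refine Finset.sum_congr rfl fun i _ => ?_
  simp only [Nat.add_sub_cancel_left]
  rfl

lemma G_nonneg (x : ℕ → Bool) (k : ℕ) (f : (Fin k → Bool) → Bool) (n : ℕ) : 0 ≤ G x k f n :=
  Finset.sum_nonneg fun i _ => by split_ifs <;> norm_num

lemma G_compl (x : ℕ → Bool) (k : ℕ) (f : (Fin k → Bool) → Bool) (n : ℕ) :
    G x k f n + G x k (fun v => !(f v)) n = n := by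
  unfold G
  rw [← Finset.sum_add_distrib]
  rw [Finset.sum_congr rfl (g := fun _ => (1:ℝ))]
  · simp
  · intro i _
    by_cases h : x (k + i) = f (F x k i) <;> simp [h]

lemma gammaWord_le_G (x : ℕ → Bool) (k n : ℕ) (hn : 0 < n) (f : (Fin k → Bool) → Bool) :
    gammaWord k x (n + k) * n ≤ G x k f n := by
  have hn' : (0:ℝ) < n := by exact_mod_cast hn
  rw [gammaWord_eq, Nat.add_sub_cancel]
  push_cast
  rw [add_sub_cancel_right, one_div, mul_comm, ← mul_assoc, mul_inv_cancel₀ hn'.ne', one_mul]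
  exact Finset.inf'_le (f := fun f => G x k f n) (Finset.mem_univ f)

lemma exists_G (x : ℕ → Bool) (k n : ℕ) (hn : 0 < n) :
    ∃ f, gammaWord k x (n + k) * n = G x k f n := by
  have hn' : (0:ℝ) < n := by exact_mod_cast hn
  rw [gammaWord_eq, Nat.add_sub_cancel]
  push_cast
  rw [add_sub_cancel_right, one_div, mul_comm, ← mul_assoc, mul_inv_cancel₀ hn'.ne', one_mul]
  obtain ⟨f, _, hf⟩ := Finset.exists_mem_eq_inf'
    (Finset.univ_nonempty (α := (Fin k → Bool) → Bool)) (fun f => G x k f n)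
  exact ⟨f, hf⟩

lemma gammaWord_nonneg (x : ℕ → Bool) (k n : ℕ) : 0 ≤ gammaWord k x n := by
  rcases le_or_gt n k with h | h
  · rw [gammaWord_eq, Nat.sub_eq_zero_of_le h]
    simp [G]
  · obtain ⟨m, rfl⟩ := Nat.exists_eq_add_of_lt h
    have e : k + m + 1 = (m + 1) + k := by ring
    rw [e]
    obtain ⟨f, hf⟩ := exists_G x k (m + 1) (by omega)
    have := G_nonneg x k f (m + 1)
    rw [← hf] at this
    exact nonneg_of_mul_nonneg_left this (by positivity)

lemma gammaWord_le (x : ℕ → Bool) (k n : ℕ) : gammaWord k x n ≤ 1 / 2 := by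
  rcases le_or_gt n k with h | h
  · rw [gammaWord_eq, Nat.sub_eq_zero_of_le h]
    simp [G]
  · obtain ⟨m, rfl⟩ := Nat.exists_eq_add_of_lt h
    have e : k + m + 1 = (m + 1) + k := by ring
    rw [e]
    have h1 := gammaWord_le_G x k (m + 1) (by omega) (fun _ => true)
    have h2 := gammaWord_le_G x k (m + 1) (by omega) (fun _ => !true)
    have h3 := G_compl x k (fun _ => true) (m + 1)
    have hp : (0:ℝ) < ((m + 1 : ℕ) : ℝ) := by positivity
    by_contra hc
    push Not at hc
    have := mul_lt_mul_of_pos_right hc hp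
    linarith

/-! ### Gibbs -/

lemma gibbs {ι : Type*} [Fintype ι] (p q : ι → ℝ) (hp : ∀ i, 0 ≤ p i) (hq : ∀ i, 0 < q i)
    (hps : ∑ i, p i = 1) (hqs : ∑ i, q i = 1) :
    -∑ i, p i * Real.log (p i) ≤ -∑ i, p i * Real.log (q i) := by
  have key : ∀ i, p i * Real.log (q i) - p i * Real.log (p i) ≤ q i - p i := by
    intro i
    rcases (hp i).eq_or_lt with h | h
    · rw [← h]; simp [(hq i).le]
    · have := Real.log_le_sub_one_of_pos (div_pos (hq i) h)
      rw [Real.log_div (hq i).ne' h.ne'] at this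
      have h2 := mul_le_mul_of_nonneg_left this h.le
      have h3 : p i * (q i / p i - 1) = q i - p i := by field_simp
      linarith
  have := Finset.sum_le_sum fun i (_ : i ∈ Finset.univ) => key i
  rw [Finset.sum_sub_distrib, Finset.sum_sub_distrib, hps, hqs] at this
  linarith

def ext {l : ℕ} (u : Fin l → Bool) : ℕ → Bool := fun j => if h : j < l then u ⟨j, h⟩ else false

lemma ext_snoc_lt {l : ℕ} (u : Fin l → Bool) (a : Bool) (j : ℕ) (h : j < l) :
    ext (Fin.snoc u a : Fin (l + 1) → Bool) j = ext u j := by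
  simp [ext, Fin.snoc, h, Nat.lt_succ_of_lt h]

lemma ext_snoc_eq {l : ℕ} (u : Fin l → Bool) (a : Bool) :
    ext (Fin.snoc u a : Fin (l + 1) → Bool) l = a := by
  simp [ext, Fin.snoc]

lemma sum_snoc {l : ℕ} (g : (Fin (l + 1) → Bool) → ℝ) :
    ∑ u, g u = ∑ u : Fin l → Bool, (g (Fin.snoc u false) + g (Fin.snoc u true)) := by
  rw [← (Fin.snocEquiv (fun _ : Fin (l + 1) => Bool)).sum_comp, Fintype.sum_prod_type]
  rw [Finset.sum_comm]
  refine Finset.sum_congr rfl fun u _ => ?_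
  rw [Fintype.sum_bool, add_comm]
  rfl

lemma prod_sum (r : ℕ → (ℕ → Bool) → ℝ)
    (hr : ∀ i w w', (∀ j ≤ i, w j = w' j) → r i w = r i w')
    (h1 : ∀ i w w', (∀ j < i, w j = w' j) → w i = false → w' i = true → r i w + r i w' = 1)
    (l : ℕ) : ∑ u : Fin l → Bool, ∏ i ∈ Finset.range l, r i (ext u) = 1 := by
  induction l with
  | zero => simp
  | succ l ih =>
    rw [sum_snoc, ← ih]
    refine Finset.sum_congr rfl fun u _ => ?_
    rw [Finset.prod_range_succ, Finset.prod_range_succ]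
    have e : ∀ a, ∏ i ∈ Finset.range l, r i (ext (Fin.snoc u a : Fin (l + 1) → Bool))
        = ∏ i ∈ Finset.range l, r i (ext u) := by
      intro a
      refine Finset.prod_congr rfl fun i hi => ?_
      apply hr
      intro j hj
      exact ext_snoc_lt _ _ _ (lt_of_le_of_lt hj (Finset.mem_range.1 hi))
    rw [e, e, ← mul_add, h1, mul_one]
    · intro j hj
      rw [ext_snoc_lt _ _ _ hj, ext_snoc_lt _ _ _ hj]
    · exact ext_snoc_eq _ _
    · exact ext_snoc_eq _ _

lemma sum_C_mul (x : ℕ → Bool) (l N : ℕ) (g : (Fin l → Bool) → ℝ) :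
    ∑ u, C x l u N * g u = ∑ i ∈ Finset.range N, g (F x l i) := by
  unfold C
  simp_rw [Finset.sum_mul]
  rw [Finset.sum_comm]
  refine Finset.sum_congr rfl fun i _ => ?_
  simp

lemma C_nonneg (x : ℕ → Bool) (k : ℕ) (u : Fin k → Bool) (n : ℕ) : 0 ≤ C x k u n :=
  Finset.sum_nonneg fun i _ => by split_ifs <;> norm_num

lemma C_le (x : ℕ → Bool) (k : ℕ) (u : Fin k → Bool) (n : ℕ) : C x k u n ≤ n := by
  unfold C
  calc _ ≤ ∑ j ∈ Finset.range n, (1:ℝ) :=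
        Finset.sum_le_sum fun i _ => by split_ifs <;> norm_num
    _ = n := by simp

lemma hBlock_eq (x : ℕ → Bool) (l n : ℕ) (h : l ≤ n) :
    hBlock l x n = (1 / (l : ℝ)) * (-∑ u : Fin l → Bool,
      (C x l u (n + 1 - l) / ((n + 1 - l : ℕ) : ℝ)) *
      Real.logb 2 (C x l u (n + 1 - l) / ((n + 1 - l : ℕ) : ℝ))) := by
  unfold hBlock
  have : ((n + 1 - l : ℕ) : ℝ) = (n : ℝ) - l + 1 := by
    rw [Nat.cast_sub (by omega)]; push_cast; ring
  simp_rw [occ_eq, this]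
  ring

lemma hBlock_nonneg (x : ℕ → Bool) (l n : ℕ) (h : l ≤ n) : 0 ≤ hBlock l x n := by
  rw [hBlock_eq x l n h]
  apply mul_nonneg (by positivity)
  rw [neg_nonneg]
  apply Finset.sum_nonpos
  intro u _
  have h0 := C_nonneg x l u (n + 1 - l)
  apply mul_nonpos_of_nonneg_of_nonpos (by positivity)
  apply Real.logb_nonpos (by norm_num) (by positivity)
  exact div_le_one_of_le₀ (C_le _ _ _ _) (by positivity)

/-- predictor weight -/
noncomputable def predW (k : ℕ) (f : (Fin k → Bool) → Bool) (a : ℝ) (i : ℕ) (w : ℕ → Bool) : ℝ :=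
  if i < k then 1 / 2 else if w i ≠ f (F w k (i - k)) then a else 1 - a

lemma predW_congr (k : ℕ) (f : (Fin k → Bool) → Bool) (a : ℝ) (i : ℕ) (w w' : ℕ → Bool)
    (h : ∀ j ≤ i, w j = w' j) : predW k f a i w = predW k f a i w' := by
  unfold predW
  split_ifs with h1 <;> try rfl
  all_goals
    have : F w k (i - k) = F w' k (i - k) := by
      funext j; exact h _ (by have := j.2; omega)
    have := h i le_rfl
    simp_all

lemma predW_sum (k : ℕ) (f : (Fin k → Bool) → Bool) (a : ℝ) (i : ℕ) (w w' : ℕ → Bool)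
    (h : ∀ j < i, w j = w' j) (h0 : w i = false) (h1 : w' i = true) :
    predW k f a i w + predW k f a i w' = 1 := by
  unfold predW
  by_cases hi : i < k
  · simp [hi]; norm_num
  · have : F w k (i - k) = F w' k (i - k) := by
      funext j; exact h _ (by have := j.2; omega)
    rw [this, h0, h1]
    cases f (F w' k (i - k)) <;> simp [hi]

lemma entropy_bound (x : ℕ → Bool) (k l n : ℕ) (hkl : k ≤ l) (hl : 0 < l) (hln : l ≤ n)
    (f : (Fin k → Bool) → Bool) (a : ℝ) (ha : 0 < a) (ha2 : a < 1 / 2)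
    (hG : G x k f (n - k) ≤ a * ((n + 1 - l : ℕ) : ℝ)) :
    hBlock l x n ≤ (k : ℝ) / l + Real.binEntropy a / Real.log 2 := by
  set N := n + 1 - l with hN
  have hNpos : (0:ℝ) < N := by exact_mod_cast (by omega : 0 < N)
  have hlpos : (0:ℝ) < l := by exact_mod_cast hl
  have hl2 : 0 < Real.log 2 := Real.log_pos (by norm_num)
  set q : (Fin l → Bool) → ℝ := fun u => ∏ i ∈ Finset.range l, predW k f a i (ext u) with hq
  have rpos : ∀ i w, 0 < predW k f a i w := by
    intro i w; unfold predW; split_ifs <;> linarith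
  have hqpos : ∀ u, 0 < q u := fun u => Finset.prod_pos fun i _ => rpos _ _
  have hqs : ∑ u, q u = 1 := prod_sum _ (predW_congr k f a) (predW_sum k f a) l
  have hps : ∑ u, C x l u N / N = 1 := by
    have := sum_C_mul x l N (fun _ => 1)
    simp only [mul_one, Finset.sum_const, Finset.card_range, nsmul_eq_mul] at this
    rw [← Finset.sum_div, this, div_self hNpos.ne']
  have hg := gibbs (fun u => C x l u N / N) q
    (fun u => div_nonneg (C_nonneg _ _ _ _) hNpos.le) hqpos hps hqs
  have hright : -∑ u, C x l u N / N * Real.log (q u) ≤ k * Real.log 2 + l * Real.binEntropy a := by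
    have e1 : ∑ u, C x l u N / N * Real.log (q u)
        = (∑ i ∈ Finset.range N, Real.log (q (F x l i))) / N := by
      rw [← sum_C_mul x l N (fun u => Real.log (q u)), Finset.sum_div]
      exact Finset.sum_congr rfl fun u _ => by ring
    have e2 : ∀ i, Real.log (q (F x l i)) = ∑ t ∈ Finset.range l,
        Real.log (predW k f a t (ext (F x l i))) := by
      intro i
      exact Real.log_prod (fun t _ => (rpos _ _).ne')
    have e3 : ∀ t ∈ Finset.range l, -∑ i ∈ Finset.range N,
        Real.log (predW k f a t (ext (F x l i))) ≤
        N * (if t < k then Real.log 2 else Real.binEntropy a) := by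
      intro t ht
      have htl := Finset.mem_range.1 ht
      by_cases htk : t < k
      · simp [predW, htk]
      · have e4 : ∀ i ∈ Finset.range N, Real.log (predW k f a t (ext (F x l i))) =
            Real.log (1 - a) - (Real.log (1 - a) - Real.log a) *
              (if x (k + (i + (t - k))) ≠ f (F x k (i + (t - k))) then 1 else 0) := by
          intro i _
          have h1 : ext (F x l i) t = x (k + (i + (t - k))) := by
            simp only [ext, htl, F, dif_pos]
            congr 1; omega
          have h2 : F (ext (F x l i)) k (t - k) = F x k (i + (t - k)) := by
            funext j
            have hj : t - k + j < l := by have := j.2; omega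
            simp only [F, ext, hj, dif_pos]
            congr 1; omega
          simp only [predW, htk, if_false, h1, h2]
          split_ifs <;> ring
        rw [Finset.sum_congr rfl e4, Finset.sum_sub_distrib, ← Finset.mul_sum]
        have e5 : ∑ i ∈ Finset.range N,
            (if x (k + (i + (t - k))) ≠ f (F x k (i + (t - k))) then (1:ℝ) else 0)
            ≤ G x k f (n - k) := by
          unfold G
          rw [← Finset.sum_image (s := Finset.range N) (g := fun i => i + (t - k))
            (f := fun j => if x (k + j) ≠ f (F x k j) then (1:ℝ) else 0)
            (fun i _ j _ h => by simpa using h)]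
          apply Finset.sum_le_sum_of_subset_of_nonneg
          · intro j hj
            simp only [Finset.mem_image, Finset.mem_range] at hj ⊢
            obtain ⟨i, hi, rfl⟩ := hj
            omega
          · intro i _ _; split_ifs <;> norm_num
        have hlog : 0 ≤ Real.log (1 - a) - Real.log a :=
          sub_nonneg.2 (Real.log_le_log ha (by linarith))
        have e6 := mul_le_mul_of_nonneg_left (e5.trans hG) hlog
        simp only [Finset.sum_const, Finset.card_range, nsmul_eq_mul, htk, if_false]
        rw [Real.binEntropy, Real.log_inv, Real.log_inv]
        linarith
    have e7 : ∑ i ∈ Finset.range N, Real.log (q (F x l i)) = ∑ t ∈ Finset.range l,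
        ∑ i ∈ Finset.range N, Real.log (predW k f a t (ext (F x l i))) := by
      rw [Finset.sum_congr rfl fun i _ => e2 i, Finset.sum_comm]
    have e8 := Finset.sum_le_sum e3
    rw [Finset.sum_neg_distrib, ← e7, ← Finset.mul_sum] at e8
    have hb : 0 ≤ Real.binEntropy a := Real.binEntropy_nonneg ha.le (by linarith)
    have e9 : ∑ t ∈ Finset.range l, (if t < k then Real.log 2 else Real.binEntropy a)
        ≤ k * Real.log 2 + l * Real.binEntropy a := by
      calc _ ≤ ∑ t ∈ Finset.range l, ((if t < k then Real.log 2 else 0) + Real.binEntropy a) :=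
            Finset.sum_le_sum fun t _ => by split_ifs <;> linarith
        _ = _ := by
          rw [Finset.sum_add_distrib, ← Finset.sum_filter]
          have : (Finset.range l).filter (fun t => t < k) = Finset.range k := by
            ext t; simp; omega
          rw [this]; simp
    rw [e1, ← neg_div, div_le_iff₀ hNpos]
    calc _ ≤ _ := e8
      _ ≤ _ := by
        rw [mul_comm]
        exact mul_le_mul_of_nonneg_right e9 hNpos.le
  have hfin := hg.trans hright
  rw [hBlock_eq x l n hln]
  have e : ∑ u, C x l u N / N * Real.logb 2 (C x l u N / N)
      = (∑ u, C x l u N / N * Real.log (C x l u N / N)) / Real.log 2 := by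
    rw [Finset.sum_div]
    exact Finset.sum_congr rfl fun u _ => by rw [Real.logb]; ring
  rw [e, ← neg_div]
  rw [one_div_mul_eq_div, div_le_iff₀ hlpos, div_le_iff₀ hl2]
  refine hfin.trans (le_of_eq ?_)
  field_simp

lemma gbdd (x : ℕ → Bool) (k : ℕ) :
    IsBoundedUnder (· ≥ ·) atTop (fun n => gammaWord k x n) :=
  isBoundedUnder_of ⟨0, fun n => gammaWord_nonneg x k n⟩

lemma gcobdd (x : ℕ → Bool) (k : ℕ) :
    IsCoboundedUnder (· ≥ ·) atTop (fun n => gammaWord k x n) :=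
  (isBoundedUnder_of ⟨1/2, fun n => gammaWord_le x k n⟩ :
    IsBoundedUnder (· ≤ ·) atTop (fun n => gammaWord k x n)).isCoboundedUnder_ge

lemma glow_nonneg (x : ℕ → Bool) (k : ℕ) : 0 ≤ atTop.liminf (fun n => gammaWord k x n) :=
  le_liminf_of_le (gcobdd x k) (Eventually.of_forall fun n => gammaWord_nonneg x k n)

lemma glow_le (x : ℕ → Bool) (k : ℕ) : atTop.liminf (fun n => gammaWord k x n) ≤ 1 / 2 :=
  liminf_le_of_frequently_le (Eventually.of_forall fun n => gammaWord_le x k n).frequently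
    (gbdd x k)

lemma gbdd2 (x : ℕ → Bool) :
    IsBoundedUnder (· ≥ ·) atTop (fun k => atTop.liminf (fun n => gammaWord k x n)) :=
  isBoundedUnder_of ⟨0, fun k => glow_nonneg x k⟩

lemma gcobdd2 (x : ℕ → Bool) :
    IsCoboundedUnder (· ≥ ·) atTop (fun k => atTop.liminf (fun n => gammaWord k x n)) :=
  (isBoundedUnder_of ⟨1/2, fun n => glow_le x n⟩ :
    IsBoundedUnder (· ≤ ·) atTop
      (fun k => atTop.liminf (fun n => gammaWord k x n))).isCoboundedUnder_ge

lemma gammaLow_le (x : ℕ → Bool) : gammaLow x ≤ 1 / 2 :=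
  liminf_le_of_frequently_le (Eventually.of_forall fun n => glow_le x n).frequently
    (gbdd2 x)

lemma hLow_lt (x : ℕ → Bool) (h : gammaLow x < 1 / 2) : hLow x < 1 := by
  obtain ⟨b, hb1, hb2⟩ := exists_between h
  obtain ⟨k, hk⟩ := (frequently_lt_of_liminf_lt (gcobdd2 x) hb1).exists
  have hfreq := frequently_lt_of_liminf_lt (gcobdd x k) hk
  have hb0 : 0 ≤ b := by
    obtain ⟨n, hn⟩ := hfreq.exists
    exact (gammaWord_nonneg x k n).trans hn.le
  obtain ⟨a, ha1, ha2⟩ := exists_between hb2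
  have ha0 : 0 < a := lt_of_le_of_lt hb0 ha1
  have hl2 : 0 < Real.log 2 := Real.log_pos (by norm_num)
  have hE : Real.binEntropy a / Real.log 2 < 1 := by
    rw [div_lt_one hl2]
    exact Real.binEntropy_lt_log_two.2 (by norm_num at ha2 ⊢; exact ha2.ne)
  obtain ⟨c, hc1, hc2⟩ := exists_between hE
  have hkl : ∀ᶠ l : ℕ in atTop, (k : ℝ) / l + Real.binEntropy a / Real.log 2 < c := by
    have : Tendsto (fun l : ℕ => (k : ℝ) / l + Real.binEntropy a / Real.log 2) atTop
        (𝓝 (0 + Real.binEntropy a / Real.log 2)) :=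
      (tendsto_const_div_atTop_nhds_zero_nat (k : ℝ)).add_const _
    rw [zero_add] at this
    exact this.eventually_lt_const hc1
  have main : ∀ᶠ l : ℕ in atTop, ∃ᶠ n in atTop, hBlock l x n ≤ c := by
    filter_upwards [hkl, eventually_ge_atTop k, eventually_gt_atTop 0] with l hl hkl' hl0
    have hev : ∀ᶠ n : ℕ in atTop, b * n ≤ a * ((n:ℝ) + 1 - l) := by
      have := tendsto_natCast_atTop_atTop (R := ℝ) |>.eventually_ge_atTop (a * (l - 1) / (a - b))
      filter_upwards [this] with n hn
      rw [div_le_iff₀ (by linarith)] at hn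
      linarith
    refine (hfreq.and_eventually (hev.and (eventually_gt_atTop l))).mono ?_
    rintro n ⟨h1, h2, h3⟩
    obtain ⟨m, rfl⟩ : ∃ m, n = m + k := ⟨n - k, by omega⟩
    have hm : 0 < m := by omega
    obtain ⟨f, hf⟩ := exists_G x k m hm
    refine (entropy_bound x k l (m + k) hkl' hl0 h3.le f a ha0 ha2 ?_).trans hl.le
    rw [Nat.add_sub_cancel, ← hf, Nat.cast_sub (by omega)]
    push_cast at h2 ⊢
    have : gammaWord k x (m + k) * m ≤ b * m :=
      mul_le_mul_of_nonneg_right h1.le (by positivity)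
    have : 0 ≤ b * k := by positivity
    linarith
  refine lt_of_le_of_lt ?_ hc2
  have hnn : ∀ l, ∀ᶠ n in atTop, 0 ≤ hBlock l x n := fun l =>
    (eventually_ge_atTop l).mono fun n hn => hBlock_nonneg x l n hn
  apply liminf_le_of_frequently_le
  · apply Eventually.frequently
    filter_upwards [main] with l hl
    exact liminf_le_of_frequently_le hl ⟨0, hnn l⟩
  · refine ⟨0, ?_⟩
    rw [eventually_map]
    filter_upwards [main] with l hl
    refine le_liminf_of_le ?_ (hnn l)
    exact IsCoboundedUnder.of_frequently_le hl

/-! ### converse -/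

lemma G_ext (x : ℕ → Bool) (k d : ℕ) (f : (Fin k → Bool) → Bool) (n : ℕ) :
    G x (d + k) (fun v => f (fun j => v (Fin.natAdd d j))) n ≤ G x k f (d + n) := by
  unfold G
  rw [Finset.sum_range_add]
  have h0 : 0 ≤ ∑ j ∈ Finset.range d, (if x (k + j) ≠ f (F x k j) then (1:ℝ) else 0) :=
    Finset.sum_nonneg fun i _ => by split_ifs <;> norm_num
  refine le_trans (le_of_eq ?_) (le_add_of_nonneg_left h0)
  refine Finset.sum_congr rfl fun j _ => ?_
  have h1 : d + k + j = k + (d + j) := by ring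
  have h2 : (fun i : Fin k => F x (d + k) j (Fin.natAdd d i)) = F x k (d + j) := by
    funext i
    simp only [F, Fin.val_natAdd]
    congr 1; ring
  simp only [h1, h2]

lemma G_lower (x : ℕ → Bool) (h : gammaLow x = 1 / 2) (k : ℕ) (f : (Fin k → Bool) → Bool)
    (ε : ℝ) (hε : 0 < ε) : ∀ᶠ n : ℕ in atTop, 1 / 2 - ε < G x k f n / n := by
  have h1 : 1 / 2 - ε / 2 < gammaLow x := by rw [h]; linarith
  obtain ⟨m, hm, hkm⟩ :=
    ((eventually_lt_of_lt_liminf h1 (gbdd2 x)).and (eventually_ge_atTop k)).exists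
  obtain ⟨d, rfl⟩ : ∃ d, m = d + k := ⟨m - k, by omega⟩
  have h2 := eventually_lt_of_lt_liminf hm (gbdd x (d + k))
  have h3 : ∀ᶠ n : ℕ in atTop, (d : ℝ) / n < ε / 2 :=
    (tendsto_const_div_atTop_nhds_zero_nat (d : ℝ)).eventually_lt_const (by linarith)
  have h2' : ∀ᶠ n : ℕ in atTop, 1 / 2 - ε / 2 < gammaWord (d + k) x (n + k) :=
    (tendsto_add_atTop_nat k).eventually h2
  filter_upwards [h2', h3, eventually_gt_atTop d] with n a1 a2 a3
  obtain ⟨p, rfl⟩ : ∃ p, n = d + p := ⟨n - d, by omega⟩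
  have hp : 0 < p := by omega
  have b1 := gammaWord_le_G x (d + k) p hp (fun v => f (fun j => v (Fin.natAdd d j)))
  have b2 := b1.trans (G_ext x k d f p)
  have e : p + (d + k) = d + p + k := by ring
  rw [e] at b2
  have hp' : (0:ℝ) < p := by exact_mod_cast hp
  have hnp : (0:ℝ) < ((d + p : ℕ) : ℝ) := by exact_mod_cast (by omega : 0 < d + p)
  rw [lt_div_iff₀ hnp]
  rw [div_lt_iff₀ hnp] at a2
  have b3 := mul_lt_mul_of_pos_right a1 hp'
  push_cast at *
  have : 0 ≤ ε / 2 * (d:ℝ) := by positivity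
  nlinarith

lemma G_tendsto (x : ℕ → Bool) (h : gammaLow x = 1 / 2) (k : ℕ) (f : (Fin k → Bool) → Bool) :
    Tendsto (fun n : ℕ => G x k f n / n) atTop (𝓝 (1 / 2)) := by
  rw [Metric.tendsto_nhds]
  intro ε hε
  filter_upwards [G_lower x h k f ε hε, G_lower x h k (fun v => !(f v)) ε hε,
    eventually_gt_atTop 0] with n h1 h2 h3
  have hn : (0:ℝ) < n := by exact_mod_cast h3
  have h4 := G_compl x k f n
  have h5 : G x k f n / n + G x k (fun v => !(f v)) n / n = 1 := by
    rw [← add_div, h4, div_self hn.ne']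
  rw [Real.dist_eq, abs_lt]
  constructor <;> linarith

lemma F_snoc (x : ℕ → Bool) (k j : ℕ) (u : Fin k → Bool) (a : Bool) :
    F x (k + 1) j = Fin.snoc u a ↔ F x k j = u ∧ x (k + j) = a := by
  have : F x (k + 1) j = Fin.snoc (F x k j) (x (k + j)) := by
    funext i
    refine Fin.lastCases ?_ (fun i => ?_) i
    · simp [F, add_comm]
    · simp [F]
  rw [this, Fin.snoc_inj]

lemma C_sum (x : ℕ → Bool) (k : ℕ) (u : Fin k → Bool) (n : ℕ) :
    C x (k + 1) (Fin.snoc u false) n + C x (k + 1) (Fin.snoc u true) n = C x k u n := by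
  unfold C
  rw [← Finset.sum_add_distrib]
  refine Finset.sum_congr rfl fun j _ => ?_
  simp only [F_snoc]
  cases x (k + j) <;> simp

lemma C_diff (x : ℕ → Bool) (k : ℕ) (u : Fin k → Bool) (n : ℕ) :
    C x (k + 1) (Fin.snoc u false) n - C x (k + 1) (Fin.snoc u true) n
      = G x k (fun v => decide (v = u)) n - G x k (fun _ => false) n := by
  unfold C G
  rw [← Finset.sum_sub_distrib, ← Finset.sum_sub_distrib]
  refine Finset.sum_congr rfl fun j _ => ?_
  simp only [F_snoc]
  by_cases h : F x k j = u <;> cases x (k + j) <;> simp [h]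

lemma C_tendsto (x : ℕ → Bool) (h : gammaLow x = 1 / 2) (k : ℕ) (u : Fin k → Bool) :
    Tendsto (fun n : ℕ => C x k u n / n) atTop (𝓝 ((1 / 2) ^ k)) := by
  induction k with
  | zero =>
    rw [pow_zero]
    refine tendsto_const_nhds.congr' ?_
    filter_upwards [eventually_gt_atTop 0] with n hn
    have hn : (n:ℝ) ≠ 0 := by exact_mod_cast hn.ne'
    have : C x 0 u n = n := by
      simp [C, Subsingleton.elim _ u]
    rw [this, div_self hn]
  | succ k ih =>
    obtain ⟨v, a, rfl⟩ : ∃ v : Fin k → Bool, ∃ a, u = Fin.snoc v a :=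
      ⟨Fin.init u, u (Fin.last k), (Fin.snoc_init_self u).symm⟩
    have hs := ih v
    have hd := (G_tendsto x h k (fun w => decide (w = v))).sub
      (G_tendsto x h k (fun _ => false))
    have e : (fun n : ℕ => G x k (fun w => decide (w = v)) n / n - G x k (fun _ => false) n / n)
      = fun n : ℕ => (C x (k + 1) (Fin.snoc v false) n - C x (k + 1) (Fin.snoc v true) n) / n := by
      funext n; rw [C_diff, sub_div]
    rw [e, sub_self] at hd
    cases a
    · have := (hs.add hd).div_const 2
      rw [add_zero, show ((1:ℝ) / 2) ^ k / 2 = (1 / 2) ^ (k + 1) by ring] at this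
      refine this.congr fun n => ?_
      rw [← C_sum]; ring
    · have := (hs.sub hd).div_const 2
      rw [sub_zero, show ((1:ℝ) / 2) ^ k / 2 = (1 / 2) ^ (k + 1) by ring] at this
      refine this.congr fun n => ?_
      rw [← C_sum]; ring

lemma hBlock_tendsto (x : ℕ → Bool) (h : gammaLow x = 1 / 2) (l : ℕ) (hl : 0 < l) :
    Tendsto (fun n => hBlock l x n) atTop (𝓝 1) := by
  have hsh : Tendsto (fun n : ℕ => n + 1 - l) atTop atTop :=
    (tendsto_sub_atTop_nat l).comp (tendsto_add_atTop_nat 1)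
  have hlpos : (0:ℝ) < l := by exact_mod_cast hl
  have h1 : Tendsto (fun n : ℕ => (1 / (l : ℝ)) * (-∑ u : Fin l → Bool,
      (C x l u (n + 1 - l) / ((n + 1 - l : ℕ) : ℝ)) *
      Real.logb 2 (C x l u (n + 1 - l) / ((n + 1 - l : ℕ) : ℝ)))) atTop
      (𝓝 ((1 / (l : ℝ)) * (-∑ u : Fin l → Bool, ((1 / 2) ^ l * Real.logb 2 ((1 / 2) ^ l))))) := by
    refine Tendsto.const_mul _ (Tendsto.neg (tendsto_finsetSum _ fun u _ => ?_))
    have hc := (C_tendsto x h l u).comp hsh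
    have hne : ((1:ℝ) / 2) ^ l ≠ 0 := by positivity
    refine hc.mul ?_
    unfold Real.logb
    exact (hc.log hne).div_const _
  have h2 : (1 / (l : ℝ)) * (-∑ u : Fin l → Bool, (((1:ℝ) / 2) ^ l * Real.logb 2 ((1 / 2) ^ l)))
      = 1 := by
    have : Real.logb 2 (((1:ℝ) / 2) ^ l) = -l := by
      rw [Real.logb_pow, one_div, Real.logb_inv, Real.logb_self_eq_one (by norm_num)]; ring
    rw [this]
    simp only [Finset.sum_const, Finset.card_univ, Fintype.card_fun, Fintype.card_bool,
      Fintype.card_fin, nsmul_eq_mul]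
    push_cast
    have : (2:ℝ) ^ l * (1 / 2) ^ l = 1 := by rw [← mul_pow]; norm_num
    rw [← mul_assoc, this]
    field_simp
  rw [h2] at h1
  refine h1.congr' ?_
  filter_upwards [eventually_ge_atTop l] with n hn
  exact (hBlock_eq x l n hn).symm

end HG

theorem hLow_eq_one_iff_gammaLow_eq_half (x : ℕ → Bool) :
    hLow x = 1 ↔ gammaLow x = 1 / 2 := by
  constructor
  · intro h
    by_contra hne
    have := HG.hLow_lt x (lt_of_le_of_ne (HG.gammaLow_le x) hne)
    linarith
  · intro h
    have : Tendsto (fun l => atTop.liminf fun n => hBlock l x n) atTop (𝓝 1) := by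
      refine tendsto_const_nhds.congr' ?_
      filter_upwards [eventually_gt_atTop 0] with l hl
      exact (HG.hBlock_tendsto x h l hl).liminf_eq.symm
    exact this.liminf_eq
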